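/- Let r > 0 and let g : ℂ → ℂ be holomorphic on {z ∈ ℂ : |z| > r}, satisfy g(conj z) = conj(g z) for all |z| > r, and satisfy g(z) − z → 0 as |z| → ∞ (along the cobounded filter on ℂ). Let R > r and suppose |g(z)| > 1 for all |z| ≥ R. Then (1/π) ∫_{θ=0}^{π} 2·log(max(|g(R·exp(iθ))|, 1)) dθ = 2·log R. -/

import Mathlib

/-!
If `g z / z ^ n → a ≠ 0` at infinity, then `w ↦ g w⁻¹ / w⁻¹ ^ n` extends holomorphically to the
disc of radius `1 / R` with value `a` at `0`. When `g` has no zero outside the disc of radius `R`,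
the logarithm of the norm of this extension is harmonic, and its mean value property says that the
average of `log ‖g‖` over the circle of radius `R` is `n log R + log ‖a‖`. Symmetry under
conjugation turns the circle into a semicircle, and the theorem is the case `n = a = 1`.
-/

section

open Bornology Complex Filter Function InnerProductSpace MeasureTheory Metric Real Set Topology
open scoped ComplexConjugate

theorem tendsto_div_one_of_tendsto_sub {α 𝕜 : Type*} [NormedField 𝕜] {l : Filter α} {f g : α → 𝕜}
    {c : 𝕜} (hfg : Tendsto (fun x => f x - g x) l (𝓝 c)) (hg : Tendsto g l (cobounded 𝕜)) :
    Tendsto (fun x => f x / g x) l (𝓝 1) := by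
  have hlim : Tendsto (fun x => (f x - g x) * (g x)⁻¹ + 1) l (𝓝 1) := by
    simpa only [comp_apply, mul_zero, zero_add] using
      (hfg.mul (tendsto_inv₀_cobounded.comp hg)).add_const 1
  refine hlim.congr' ?_
  filter_upwards [hg.eventually_ne_cobounded 0] with x hx
  field_simp
  ring

section CircleAverage

variable {E : Type*} [NormedAddCommGroup E] [NormedSpace ℝ E]

theorem intervalIntegral_neg_self_of_even {f : ℝ → E} (hf : Function.Even f) (a : ℝ) :
    ∫ x in -a..a, f x = (2 : ℝ) • ∫ x in 0..a, f x := by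
  by_cases hint : IntervalIntegrable f volume 0 a
  · have hneg : ∫ x in -a..0, f x = ∫ x in 0..a, f x := by
      simpa only [hf _, neg_zero, neg_neg] using
        (intervalIntegral.integral_comp_neg (a := -a) (b := 0) f)
    have hint_neg : IntervalIntegrable f volume (-a) 0 := by
      simpa only [hf _, neg_zero] using
        ((IntervalIntegrable.iff_comp_neg (by finiteness)).1 hint).symm
    rw [← intervalIntegral.integral_add_adjacent_intervals hint_neg hint, hneg, two_smul]
  · have hint_neg : ¬ IntervalIntegrable f volume (-a) a := fun h =>
      hint <| h.mono_set <| uIcc_subset_uIcc_right <| by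
        rcases le_total 0 a with ha | ha <;> simp [ha]
    rw [intervalIntegral.integral_undef hint, intervalIntegral.integral_undef hint_neg, smul_zero]

theorem circleAverage_eq_pi_inv_smul_integral_of_conj {f : ℂ → E} {c R : ℝ}
    (hf : ∀ z ∈ sphere (c : ℂ) |R|, f (conj z) = f z) :
    circleAverage f c R = π⁻¹ • ∫ θ in 0..π, f (circleMap c R θ) := by
  have heven : Function.Even fun θ => f (circleMap c R θ) := fun θ => by
    beta_reduce
    rw [← hf _ (circleMap_mem_sphere' _ R θ), conj_circleMap, conj_ofReal]
  have hshift : ∫ θ in 0..2 * π, f (circleMap c R θ) = ∫ θ in -π..π, f (circleMap c R θ) := by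
    have := ((periodic_circleMap c R).comp f).intervalIntegral_add_eq 0 (-π)
    rwa [zero_add, show -π + 2 * π = π by ring] at this
  rw [circleAverage_def, hshift, intervalIntegral_neg_self_of_even heven, smul_smul]
  congr 1
  field_simp

theorem circleAverage_comp_inv (f : ℂ → E) (R : ℝ) :
    circleAverage (fun z => f z⁻¹) 0 R = circleAverage f 0 R⁻¹ := by
  rw [circleAverage_eq_circleAverage_zero_one (R := R⁻¹), ← circleAverage_zero_one_congr_inv,
    circleAverage_eq_circleAverage_zero_one]
  simp only [add_zero, mul_inv, ofReal_inv]

end CircleAverage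

theorem mapsTo_inv_ball_sdiff_zero {𝕜 : Type*} [NormedDivisionRing 𝕜] {R : ℝ} (hR : 0 < R) :
    MapsTo Inv.inv (ball (0 : 𝕜) R⁻¹ \ {0}) (closedBall 0 R)ᶜ := fun w hw => by
  have hw_lt : ‖w‖ < R⁻¹ := mem_ball_zero_iff.1 hw.1
  simpa using (lt_inv_comm₀ (norm_pos_iff.2 hw.2) hR).1 hw_lt

theorem mapsTo_inv_closedBall_sdiff_zero {𝕜 : Type*} [NormedDivisionRing 𝕜] {R : ℝ} (hR : 0 < R) :
    MapsTo Inv.inv (closedBall (0 : 𝕜) R⁻¹ \ {0}) (ball 0 R)ᶜ := fun w hw => by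
  have hw_le : ‖w‖ ≤ R⁻¹ := mem_closedBall_zero_iff.1 hw.1
  simpa using (le_inv_comm₀ (norm_pos_iff.2 hw.2) hR).1 hw_le

theorem closure_compl_closedBall {F : Type*} [NormedAddCommGroup F] [NormedSpace ℝ F] (x : F)
    {R : ℝ} (hR : R ≠ 0) : closure (closedBall x R)ᶜ = (ball x R)ᶜ := by
  rw [closure_compl, interior_closedBall x hR]

theorem diffContOnCl_compl_closedBall_of_lt {𝕜 F E : Type*} [NontriviallyNormedField 𝕜]
    [NormedAddCommGroup F] [NormedSpace 𝕜 F] [NormedAddCommGroup E] [NormedSpace 𝕜 E] {f : F → E}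
    {r R : ℝ} (hrR : r < R) (hf : DifferentiableOn 𝕜 f {z | r < ‖z‖}) :
    DiffContOnCl 𝕜 f (closedBall 0 R)ᶜ := by
  have hsub : closure (closedBall (0 : F) R)ᶜ ⊆ (ball 0 R)ᶜ :=
    closure_minimal (compl_subset_compl.2 ball_subset_closedBall) isOpen_ball.isClosed_compl
  exact DifferentiableOn.diffContOnCl <| hf.mono fun z hz => hrR.trans_le (by simpa using hsub hz)

theorem diffContOnCl_update_comp_inv {E : Type*} [NormedAddCommGroup E] [NormedSpace ℂ E]
    [CompleteSpace E] {f : ℂ → E} {a : E} {R : ℝ} (hR : 0 < R)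
    (hf : DiffContOnCl ℂ f (closedBall 0 R)ᶜ) (ha : Tendsto f (cobounded ℂ) (𝓝 a)) :
    DiffContOnCl ℂ (update (fun w => f w⁻¹) 0 a) (ball 0 R⁻¹) := by
  have heq : ∀ s : Set ℂ, EqOn (update (fun w => f w⁻¹) 0 a) (fun w => f w⁻¹) (s \ {0}) :=
    fun s w hw => update_of_ne hw.2 _ _
  have hzero : ContinuousAt (update (fun w => f w⁻¹) 0 a) 0 :=
    continuousAt_update_same.2 (ha.comp tendsto_inv₀_nhdsNE_zero)
  refine .mk_ball ?_ fun w hw => ?_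
  · rw [← differentiableOn_compl_singleton_and_continuousAt_iff
      (ball_mem_nhds 0 (inv_pos.2 hR))]
    refine ⟨.congr ?_ (heq _), hzero⟩
    exact hf.differentiableOn.comp (differentiableOn_inv.mono fun w hw => hw.2)
      (mapsTo_inv_ball_sdiff_zero hR)
  · rcases eq_or_ne w 0 with rfl | hw0
    · exact hzero.continuousWithinAt
    · rw [continuousWithinAt_update_of_ne hw0]
      have hcont : ContinuousOn (fun w => f w⁻¹) (closedBall 0 R⁻¹ \ {0}) :=
        (closure_compl_closedBall (0 : ℂ) hR.ne' ▸ hf.continuousOn).comp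
          (continuousOn_inv₀.mono fun w hw => hw.2) (mapsTo_inv_closedBall_sdiff_zero hR)
      simpa only [hw0.nhdsWithin_sdiff_singleton, ContinuousWithinAt] using hcont w ⟨hw, hw0⟩

theorem harmonicContOnCl_log_norm {f : ℂ → ℂ} {U : Set ℂ} (hU : IsOpen U)
    (hf : DiffContOnCl ℂ f U) (hne : ∀ z ∈ closure U, f z ≠ 0) :
    HarmonicContOnCl (fun z => Real.log ‖f z‖) U where
  harmonicOnNhd z hz := (hf.differentiableOn.analyticAt (hU.mem_nhds hz)).harmonicAt_log_norm
    (hne z (subset_closure hz))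
  continuousOn := hf.continuousOn.norm.log fun z hz => norm_ne_zero_iff.2 (hne z hz)

theorem circleAverage_log_norm_of_tendsto_cobounded {f : ℂ → ℂ} {a : ℂ} {R : ℝ} (hR : 0 < R)
    (hf : DiffContOnCl ℂ f (closedBall 0 R)ᶜ) (hne : ∀ z, R ≤ ‖z‖ → f z ≠ 0)
    (ha : Tendsto f (cobounded ℂ) (𝓝 a)) (ha0 : a ≠ 0) :
    circleAverage (fun z => Real.log ‖f z‖) 0 R = Real.log ‖a‖ := by
  set h := update (fun w => f w⁻¹) 0 a with h_def
  have hR' : 0 < R⁻¹ := inv_pos.2 hR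
  have h_ne : ∀ w ∈ closure (ball 0 R⁻¹), h w ≠ 0 := fun w hw => by
    rcases eq_or_ne w 0 with rfl | hw0
    · rwa [h_def, update_self]
    · rw [h_def, update_of_ne hw0]
      refine hne _ ?_
      simpa using mapsTo_inv_closedBall_sdiff_zero hR ⟨closure_ball_subset_closedBall hw, hw0⟩
  have h_harm : HarmonicContOnCl (fun w => Real.log ‖h w‖) (ball 0 |R⁻¹|) := by
    rw [abs_of_pos hR']
    exact harmonicContOnCl_log_norm isOpen_ball (diffContOnCl_update_comp_inv hR hf ha) h_ne
  calc circleAverage (fun z => Real.log ‖f z‖) 0 R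
      = circleAverage (fun w => Real.log ‖f w⁻¹‖) 0 R⁻¹ := by
        rw [circleAverage_comp_inv (fun z => Real.log ‖f z‖), inv_inv]
    _ = circleAverage (fun w => Real.log ‖h w‖) 0 R⁻¹ :=
        circleAverage_congr_sphere fun w hw => by
          rw [h_def, update_of_ne (ne_of_mem_sphere hw (abs_pos.2 hR'.ne').ne')]
    _ = Real.log ‖a‖ := by rw [h_harm.circleAverage_eq, h_def, update_self]

theorem circleAverage_log_norm_of_tendsto_div_zpow {g : ℂ → ℂ} {a : ℂ} {R : ℝ} {n : ℤ}
    (hR : 0 < R) (hg : DiffContOnCl ℂ g (closedBall 0 R)ᶜ) (hne : ∀ z, R ≤ ‖z‖ → g z ≠ 0)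
    (ha : Tendsto (fun z => g z / z ^ n) (cobounded ℂ) (𝓝 a)) (ha0 : a ≠ 0) :
    circleAverage (fun z => Real.log ‖g z‖) 0 R = n * Real.log R + Real.log ‖a‖ := by
  have hz0 : ∀ z : ℂ, R ≤ ‖z‖ → z ≠ 0 := fun z hz => norm_pos_iff.1 (hR.trans_le hz)
  have hcl : ∀ z ∈ closure (closedBall (0 : ℂ) R)ᶜ, R ≤ ‖z‖ := fun z hz => by
    simpa [closure_compl_closedBall (0 : ℂ) hR.ne'] using hz
  have hdiv : DiffContOnCl ℂ (fun z => g z / z ^ n) (closedBall 0 R)ᶜ := by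
    have hzpow : DiffContOnCl ℂ (fun z : ℂ => z ^ (-n)) (closedBall 0 R)ᶜ :=
      DifferentiableOn.diffContOnCl fun z hz =>
        (differentiableAt_zpow.2 (.inl (hz0 z (hcl z hz)))).differentiableWithinAt
    simpa only [smul_eq_mul, zpow_neg, inv_mul_eq_div] using hzpow.smul hg
  have hdiv_ne : ∀ z, R ≤ ‖z‖ → g z / z ^ n ≠ 0 := fun z hz =>
    div_ne_zero (hne z hz) (zpow_ne_zero n (hz0 z hz))
  have hsphere : EqOn (fun z => Real.log ‖g z‖)
      (fun z => n * Real.log R + Real.log ‖g z / z ^ n‖) (sphere 0 |R|) := fun z hz => by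
    have hzR : ‖z‖ = R := by simpa [abs_of_pos hR] using hz
    have hRn : R ^ n ≠ 0 := zpow_ne_zero n hR.ne'
    simp only [norm_div, norm_zpow, hzR]
    rw [Real.log_div (norm_ne_zero_iff.2 (hne z hzR.ge)) hRn, Real.log_zpow, add_sub_cancel]
  have hint : CircleIntegrable (fun z => Real.log ‖g z / z ^ n‖) 0 R := by
    refine ContinuousOn.circleIntegrable hR.le (.log (.norm ?_) fun z hz => ?_)
    · refine hdiv.continuousOn.mono fun z hz => ?_
      rw [closure_compl_closedBall (0 : ℂ) hR.ne']
      exact fun hzb => (mem_ball.1 hzb).ne hz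
    · exact norm_ne_zero_iff.2 (hdiv_ne z (mem_sphere_zero_iff_norm.1 hz).ge)
  rw [circleAverage_congr_sphere hsphere, circleAverage_fun_add (circleIntegrable_const _ _ _) hint,
    circleAverage_const, circleAverage_log_norm_of_tendsto_cobounded hR hdiv hdiv_ne ha ha0]

theorem greenGH_infinity_avg_semicircle_general {g : ℂ → ℂ} {a : ℂ} {R : ℝ} {n : ℤ} (hR : 0 < R)
    (hg : DiffContOnCl ℂ g (closedBall 0 R)ᶜ)
    (hsym : ∀ z : ℂ, ‖z‖ = R → ‖g (conj z)‖ = ‖g z‖)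
    (ha : Tendsto (fun z => g z / z ^ n) (cobounded ℂ) (𝓝 a)) (ha0 : a ≠ 0)
    (hne : ∀ z, R < ‖z‖ → g z ≠ 0) (hbig : ∀ z, ‖z‖ = R → 1 ≤ ‖g z‖) :
    (1 / π) * ∫ θ in (0 : ℝ)..π, 2 * Real.log (max ‖g (R * Complex.exp (θ * I))‖ 1)
      = 2 * (n * Real.log R + Real.log ‖a‖) := by
  have hne' : ∀ z, R ≤ ‖z‖ → g z ≠ 0 := fun z hz => hz.lt_or_eq.elim (hne z) fun hzR =>
    norm_pos_iff.1 (one_pos.trans_le (hbig z hzR.symm))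
  have hsym' : ∀ z ∈ sphere ((0 : ℝ) : ℂ) |R|, Real.log ‖g (conj z)‖ = Real.log ‖g z‖ :=
    fun z hz => by rw [hsym z (by simpa [abs_of_pos hR] using hz)]
  have hmax : ∀ θ : ℝ, max ‖g (R * Complex.exp (θ * I))‖ 1 = ‖g (circleMap 0 R θ)‖ := fun θ => by
    rw [← circleMap_zero,
      max_eq_left (hbig _ (by rw [norm_circleMap_zero, abs_of_pos hR]))]
  have havg := circleAverage_eq_pi_inv_smul_integral_of_conj (f := fun z => Real.log ‖g z‖) hsym'
  rw [ofReal_zero, circleAverage_log_norm_of_tendsto_div_zpow hR hg hne' ha ha0, smul_eq_mul]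
    at havg
  simp only [hmax, intervalIntegral.integral_const_mul, havg]
  ring

end

/-- Fourth claim of Lemma 4.3: under the hypotheses of the Schwarz-reflection
extension of a hydrodynamically normalized conformal map, if `|g(z)| > 1` for
`|z| ≥ R`, then the average of `G_ℍ(∞, g(·)) = 2 log(max(|g(·)|,1))` on the
semicircle of radius `R` equals `2 log R`. -/
theorem greenGH_infinity_avg_semicircle (r R : ℝ) (hr : 0 < r) (hR : r < R)
    (g : ℂ → ℂ)
    (hg : DifferentiableOn ℂ g {z : ℂ | r < ‖z‖})
    (hsym : ∀ z : ℂ, r < ‖z‖ → g ((starRingEnd ℂ) z) = (starRingEnd ℂ) (g z))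
    (hnorm : Filter.Tendsto (fun z => g z - z) (Bornology.cobounded ℂ) (nhds 0))
    (hbig : ∀ z : ℂ, R ≤ ‖z‖ → 1 < ‖g z‖) :
    (1 / Real.pi) * ∫ θ in (0:ℝ)..Real.pi,
        2 * Real.log (max ‖g ((R : ℂ) * Complex.exp ((θ : ℂ) * Complex.I))‖ 1)
      = 2 * Real.log R := by
  have hlim : Filter.Tendsto (fun z => g z / z ^ (1 : ℤ)) (Bornology.cobounded ℂ) (nhds 1) := by
    simpa only [zpow_one] using tendsto_div_one_of_tendsto_sub hnorm Filter.tendsto_id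
  simpa using greenGH_infinity_avg_semicircle_general (hr.trans hR)
    (diffContOnCl_compl_closedBall_of_lt hR hg)
    (fun z hz => by rw [hsym z (hz ▸ hR), RCLike.norm_conj]) hlim one_ne_zero
    (fun z hz => norm_pos_iff.1 (one_pos.trans (hbig z hz.le))) (fun z hz => (hbig z hz.ge).le)
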